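/- Let S₁, S₂, S₃, S₄ be continuous semilattices with zero and let R ⊆ S₁ × S₂, Q ⊆ S₂ × S₃, T ⊆ S₃ × S₄ be pseudo-invertible ambiguous representations (each satisfying: whenever (x,y) belongs to the relation and y' ≪ y, there exists x' ≪ x with (x',y') in the relation). Then the composition ';' is associative: R;(Q;T) = (R;Q);T. -/

import Mathlib

/-- A dcpo: every nonempty directed subset has a least upper bound. -/
def IsDcpo (α : Type*) [PartialOrder α] : Prop :=
  ∀ D : Set α, D.Nonempty → DirectedOn (· ≤ ·) D → ∃ a : α, IsLUB D a

/-- Scott closed: a lower set closed under suprema of its (nonempty) directed subsets. -/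
def ScottClosed {α : Type*} [PartialOrder α] (A : Set α) : Prop :=
  IsLowerSet A ∧
    ∀ D : Set α, D ⊆ A → D.Nonempty → DirectedOn (· ≤ ·) D → ∀ a : α, IsLUB D a → a ∈ A

/-- Scott closure: the least Scott closed set containing `A`. -/
def scottClosure {α : Type*} [PartialOrder α] (A : Set α) : Set α :=
  ⋂₀ {C : Set α | ScottClosed C ∧ A ⊆ C}

/-- `x` is way below `y`. -/
def WayBelow {α : Type*} [PartialOrder α] (x y : α) : Prop :=
  ∀ D : Set α, D.Nonempty → DirectedOn (· ≤ ·) D → ∀ a : α, IsLUB D a → y ≤ a → ∃ d ∈ D, x ≤ d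

/-- A continuous (meet-)semilattice with zero: a dcpo meet-semilattice with bottom in which
every element is the directed supremum of the elements way below it. -/
def IsContinuousSemilattice (α : Type*) [SemilatticeInf α] [OrderBot α] : Prop :=
  IsDcpo α ∧
    ∀ y : α, DirectedOn (· ≤ ·) {x : α | WayBelow x y} ∧ IsLUB {x : α | WayBelow x y} y

/-- A compatibility `P : S × S' → {0,1}` (encoded with `Prop` as the two-element lattice,
`P x y` meaning `P(x,y) = 1`): it preserves binary meets in each variable separately,
sends pairs containing a bottom element to `0`, and is Scott continuous (preserves
suprema of nonempty directed subsets of the product). -/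
def IsCompatibility {S S' : Type*} [SemilatticeInf S] [OrderBot S]
    [SemilatticeInf S'] [OrderBot S'] (P : S → S' → Prop) : Prop :=
  (∀ x₁ x₂ y, P (x₁ ⊓ x₂) y ↔ P x₁ y ∧ P x₂ y) ∧
  (∀ x y₁ y₂, P x (y₁ ⊓ y₂) ↔ P x y₁ ∧ P x y₂) ∧
  (∀ y, ¬ P ⊥ y) ∧ (∀ x, ¬ P x ⊥) ∧
  (∀ D : Set (S × S'), D.Nonempty → DirectedOn (· ≤ ·) D → ∀ a : S × S', IsLUB D a →
    (P a.1 a.2 ↔ ∃ p ∈ D, P p.1 p.2))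

/-- A separating compatibility. -/
def IsSeparatingCompatibility {S S' : Type*} [SemilatticeInf S] [OrderBot S]
    [SemilatticeInf S'] [OrderBot S'] (P : S → S' → Prop) : Prop :=
  IsCompatibility P ∧
  (∀ x₁ x₂ : S, (∀ y, P x₁ y ↔ P x₂ y) → x₁ = x₂) ∧
  (∀ y₁ y₂ : S', (∀ x, P x y₁ ↔ P x y₂) → y₁ = y₂)

/-- Transversal of `A ⊆ S` w.r.t. a compatibility `P : S × S' → {0,1}`:
all `y ∈ S'` with `P(x,y) = 0` for every `x ∈ A`. -/
def transversal {S S' : Type*} (P : S → S' → Prop) (A : Set S) : Set S' :=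
  {y : S' | ∀ x ∈ A, ¬ P x y}

/-- A (crisp) ambiguous representation of `S₁` in `S₂`. -/
def AmbRep {S₁ S₂ : Type*} [PartialOrder S₁] [PartialOrder S₂] (R : Set (S₁ × S₂)) : Prop :=
  (∀ x : S₁, ({y : S₂ | (x, y) ∈ R}).Nonempty ∧ ScottClosed {y : S₂ | (x, y) ∈ R}) ∧
  (∀ y : S₂, IsUpperSet {x : S₁ | (x, y) ∈ R})

/-- The pseudo-inverse of a relation `R ⊆ S₁ × S₂` w.r.t. compatibilities
`P₁ : S₁ × T₁ → {0,1}` and `P₂ : S₂ × T₂ → {0,1}`. -/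
def psInv {S₁ S₂ T₁ T₂ : Type*} (P₁ : S₁ → T₁ → Prop) (P₂ : S₂ → T₂ → Prop)
    (R : Set (S₁ × S₂)) : Set (T₂ × T₁) :=
  {p : T₂ × T₁ | ∀ x : S₁, P₁ x p.2 → ∃ y : S₂, (x, y) ∈ R ∧ P₂ y p.1}

/-- Composition `R ; Q` of ambiguous representations. -/
def ambComp {S₁ S₂ S₃ : Type*} [PartialOrder S₃]
    (R : Set (S₁ × S₂)) (Q : Set (S₂ × S₃)) : Set (S₁ × S₃) :=
  {p : S₁ × S₃ | ∀ z' : S₃, WayBelow z' p.2 → ∃ y : S₂, (p.1, y) ∈ R ∧ (y, z') ∈ Q}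

/-- Pseudo-invertibility condition (c). -/
def PseudoInvertible {S₁ S₂ : Type*} [PartialOrder S₁] [PartialOrder S₂]
    (R : Set (S₁ × S₂)) : Prop :=
  ∀ x y, (x, y) ∈ R → ∀ y', WayBelow y' y → ∃ x', WayBelow x' x ∧ (x', y') ∈ R

/-- An `L`-fuzzy ambiguous representation of `S₁` in `S₂`. -/
def LAmbRep {S₁ S₂ L : Type*} [PartialOrder S₁] [PartialOrder S₂] [PartialOrder L]
    (R : Set (S₁ × S₂ × L)) : Prop :=
  (∀ (y : S₂) (α : L), IsUpperSet {x : S₁ | (x, y, α) ∈ R}) ∧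
  (∀ (x : S₁) (α : L),
    ({y : S₂ | (x, y, α) ∈ R}).Nonempty ∧ ScottClosed {y : S₂ | (x, y, α) ∈ R}) ∧
  (∀ (x : S₁) (y : S₂), ({α : L | (x, y, α) ∈ R}).Nonempty ∧
    DirectedOn (· ≤ ·) {α : L | (x, y, α) ∈ R} ∧ ScottClosed {α : L | (x, y, α) ∈ R})

/-- The `α`-cut of an `L`-fuzzy relation. -/
def lCut {S₁ S₂ L : Type*} (R : Set (S₁ × S₂ × L)) (α : L) : Set (S₁ × S₂) :=
  {p : S₁ × S₂ | (p.1, p.2, α) ∈ R}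

/-- The pseudo-inverse of an `L`-fuzzy ambiguous representation, given through its
`α`-cuts: `(R⊤)_α = ⋂_{β ≪ α} (R_β)⊤`. -/
def lpsInv {S₁ S₂ T₁ T₂ L : Type*} [PartialOrder L]
    (P₁ : S₁ → T₁ → Prop) (P₂ : S₂ → T₂ → Prop) (R : Set (S₁ × S₂ × L)) :
    Set (T₂ × T₁ × L) :=
  {p : T₂ × T₁ × L | ∀ β : L, WayBelow β p.2.2 → (p.1, p.2.1) ∈ psInv P₁ P₂ (lCut R β)}

/-- Pseudo-invertibility condition (d) for `L`-fuzzy ambiguous representations. -/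
def LPseudoInvertible {S₁ S₂ L : Type*} [PartialOrder S₁] [PartialOrder S₂] [PartialOrder L]
    (R : Set (S₁ × S₂ × L)) : Prop :=
  ∀ x y α, (x, y, α) ∈ R → ∀ y', WayBelow y' y → ∀ α', WayBelow α' α →
    ∃ x', WayBelow x' x ∧ (x', y', α') ∈ R

/-- A unital quantale structure on a complete lattice: an associative multiplication
distributing over arbitrary suprema in each variable, with the top element as two-sided
unit. -/
def IsQuantaleMul {L : Type*} [CompleteLattice L] (mul : L → L → L) : Prop :=
  (∀ a b c, mul (mul a b) c = mul a (mul b c)) ∧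
  (∀ (s : Set L) (b : L), mul (sSup s) b = ⨆ a ∈ s, mul a b) ∧
  (∀ (a : L) (s : Set L), mul a (sSup s) = ⨆ b ∈ s, mul a b) ∧
  (∀ a, mul ⊤ a = a) ∧ (∀ a, mul a ⊤ = a)

/-- Composition `R ⊛ Q` of `L`-fuzzy ambiguous representations w.r.t. a quantale
multiplication `mul` on `L`. -/
def lComp {S₁ S₂ S₃ L : Type*} [PartialOrder S₃] [CompleteLattice L] (mul : L → L → L)
    (R : Set (S₁ × S₂ × L)) (Q : Set (S₂ × S₃ × L)) : Set (S₁ × S₃ × L) :=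
  {p : S₁ × S₃ × L | ∀ z' : S₃, WayBelow z' p.2.1 → ∀ α' : L, WayBelow α' p.2.2 →
    ∃ (n : ℕ) (y : Fin n → S₂) (β γ : Fin n → L),
      (∀ i, (p.1, y i, β i) ∈ R ∧ (y i, z', γ i) ∈ Q) ∧ α' ≤ ⨆ i, mul (β i) (γ i)}

theorem WayBelow.le {α : Type*} [PartialOrder α] {x y : α} (h : WayBelow x y) : x ≤ y := by
  obtain ⟨d, rfl, hd⟩ :=
    h {y} (Set.singleton_nonempty y) (directedOn_singleton y) y isLUB_singleton le_rfl
  exact hd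

theorem WayBelow.trans_le {α : Type*} [PartialOrder α] {x y z : α} (h : WayBelow x y)
    (hyz : y ≤ z) : WayBelow x z :=
  fun D hne hD a ha hza => h D hne hD a ha (hyz.trans hza)

theorem wayBelow_bot {α : Type*} [PartialOrder α] [OrderBot α] (y : α) : WayBelow ⊥ y :=
  fun _ hne _ _ _ _ => hne.imp fun _ hd => ⟨hd, bot_le⟩

/-- The way-below relation of a continuous semilattice has the interpolation property. -/
theorem IsContinuousSemilattice.exists_wayBelow_wayBelow {α : Type*} [SemilatticeInf α]
    [OrderBot α] (h : IsContinuousSemilattice α) {x y : α} (hxy : WayBelow x y) :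
    ∃ e, WayBelow x e ∧ WayBelow e y := by
  have hdir : DirectedOn (· ≤ ·) {d : α | ∃ e, WayBelow d e ∧ WayBelow e y} := by
    rintro d₁ ⟨e₁, hd₁, he₁⟩ d₂ ⟨e₂, hd₂, he₂⟩
    obtain ⟨e, he, h₁, h₂⟩ := (h.2 y).1 e₁ he₁ e₂ he₂
    obtain ⟨d, hd, h₁', h₂'⟩ := (h.2 e).1 d₁ (hd₁.trans_le h₁) d₂ (hd₂.trans_le h₂)
    exact ⟨d, ⟨e, hd, he⟩, h₁', h₂'⟩
  have hlub : IsLUB {d : α | ∃ e, WayBelow d e ∧ WayBelow e y} y := by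
    refine ⟨fun d ⟨e, hd, he⟩ => hd.le.trans he.le, fun u hu => ?_⟩
    exact (h.2 y).2.2 fun e he => (h.2 e).2.2 fun d hd => hu ⟨e, hd, he⟩
  obtain ⟨d, ⟨e, hd, he⟩, hxd⟩ :=
    hxy {d : α | ∃ e, WayBelow d e ∧ WayBelow e y} ⟨⊥, ⊥, wayBelow_bot _, wayBelow_bot _⟩
      hdir y hlub le_rfl
  exact ⟨e, fun D hne hD a ha hea =>
    (hd D hne hD a ha hea).imp fun _ hc => ⟨hc.1, hxd.trans hc.2⟩, he⟩

theorem AmbRep.mem_of_le {S₁ S₂ : Type*} [PartialOrder S₁] [PartialOrder S₂]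
    {R : Set (S₁ × S₂)} (hR : AmbRep R) {x : S₁} {y y' : S₂} (h : (x, y) ∈ R) (hy : y' ≤ y) :
    (x, y') ∈ R :=
  (hR.1 x).2.1 hy h

/-- Composition of pseudo-invertible ambiguous representations is
associative: `R;(Q;T) = (R;Q);T`. -/
theorem stmt12 {S₁ S₂ S₃ S₄ : Type*}
    [SemilatticeInf S₁] [OrderBot S₁] [SemilatticeInf S₂] [OrderBot S₂]
    [SemilatticeInf S₃] [OrderBot S₃] [SemilatticeInf S₄] [OrderBot S₄]
    (h₁ : IsContinuousSemilattice S₁) (h₂ : IsContinuousSemilattice S₂)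
    (h₃ : IsContinuousSemilattice S₃) (h₄ : IsContinuousSemilattice S₄)
    (R : Set (S₁ × S₂)) (Q : Set (S₂ × S₃)) (T : Set (S₃ × S₄))
    (hR : AmbRep R) (hQ : AmbRep Q) (hT : AmbRep T)
    (hRpi : PseudoInvertible R) (hQpi : PseudoInvertible Q) (hTpi : PseudoInvertible T) :
    ambComp R (ambComp Q T) = ambComp (ambComp R Q) T := by
  ext ⟨x, w⟩
  constructor
  · intro h w' hw'
    obtain ⟨w₁, hw₁, hw₁'⟩ := h₄.exists_wayBelow_wayBelow hw'
    obtain ⟨y, hxy, hy⟩ := h w₁ hw₁'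
    obtain ⟨z, hyz, hz⟩ := hy w' hw₁
    exact ⟨z, fun z' hz' => ⟨y, hxy, hQ.mem_of_le hyz hz'.le⟩, hz⟩
  · intro h w' hw'
    obtain ⟨w₁, hw₁, hw₁'⟩ := h₄.exists_wayBelow_wayBelow hw'
    obtain ⟨z, hxz, hz⟩ := h w₁ hw₁'
    obtain ⟨z', hz', hzw⟩ := hTpi z w₁ hz w' hw₁
    obtain ⟨y, hxy, hyz⟩ := hxz z' hz'
    exact ⟨y, hxy, fun w'' hw'' => ⟨z', hyz, hT.mem_of_le hzw hw''.le⟩⟩
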